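/- arXiv:2510.15663 — 5 statements merged into one kernel-verified Lean document; each statement's English description precedes it below -/
import Mathlib

section
/- Let σ : Σ → Σ be a topologically transitive one-sided countable state Markov shift, let G be a countable group, let ψ : Σ → G depend only on the first coordinate, and suppose the skew product T_ψ : Σ×G → Σ×G is topologically transitive. Let φ : Σ → ℝ be locally Hölder continuous. Then P_G(φ, T_ψ) ≤ P_G(φ, T_ψ̄), and for every w ∈ ℝ^d one has P_G(φ, T_ψ̄) ≤ P_G(φ + ⟨w, ψ̄⟩, σ), where ⟨·,·⟩ is the standard inner product on ℝ^d. -/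
/-!
Both inequalities hold term by term in the sums over periodic points of a given period `n`.

A periodic point of a skew product starting at `(a, 1)` is determined by its base path, so it is
the same thing as a point `x ∈ [a]` with `σ^n x = x` and `ψ_n(x) = 1`. Since `π` is a
homomorphism, `ψ_n(x) = 1` implies `ψ̄_n(x) = 0`; hence the points counted for `T_ψ` are among
those counted for `T_ψ̄`, with equal weights. For those counted for `T_ψ̄`, the Birkhoff sum of
`⟨w, ψ̄⟩` telescopes to `⟨w, ψ̄_n(x)⟩ = 0`, so `φ` and `φ + ⟨w, ψ̄⟩` give them the same weight,
and they are among all the periodic points of `σ` in `[a]`. `gurevic_le_of_map` turns such a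
weight-preserving injection into an inequality of pressures; it is applied to
`(x, g) ↦ (x, π g)` (`skewMap`) and to the projection `skewProj` to the base.
-/

open scoped ENNReal NNReal BigOperators
open Filter

namespace Gurevic

/-! ## Countable state Markov shifts -/

/-- The space of a one-sided countable state Markov shift with state set `S`
and transition matrix `A`. -/
def Space {S : Type*} (A : S → S → Prop) : Type _ :=
  {x : ℕ → S // ∀ n : ℕ, A (x n) (x (n + 1))}

/-- The shift map of a countable state Markov shift. -/
def shift {S : Type*} (A : S → S → Prop) : Space A → Space A :=
  fun x => ⟨fun n => x.1 (n + 1), fun n => x.2 (n + 1)⟩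

/-- The cylinder set determined by a word `w`. -/
def Cyl {S : Type*} (A : S → S → Prop) (w : List S) : Set (Space A) :=
  {x | ∀ (i : ℕ) (h : i < w.length), x.1 i = w[i]}

/-- The cylinder set determined by a single state `a`. -/
def CylS {S : Type*} (A : S → S → Prop) (a : S) : Set (Space A) :=
  {x | x.1 0 = a}

/-- A word is allowed if all its transitions are allowed. -/
def Allowed {S : Type*} (A : S → S → Prop) (w : List S) : Prop :=
  List.Chain' A w

/-- Topological transitivity: some orbit is dense (it visits every nonempty
cylinder; cylinders form a basis for the topology). -/
def TopTransitive {S : Type*} (A : S → S → Prop) : Prop :=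
  ∃ x : Space A, ∀ w : List S, (Cyl A w).Nonempty → ∃ n : ℕ, (shift A)^[n] x ∈ Cyl A w

/-- Topological mixing: for all states `a, b` there is `N` such that for every
`n ≥ N` there is a word `w` of length `n` with `awb` allowed. -/
def TopMixing {S : Type*} (A : S → S → Prop) : Prop :=
  ∀ a b : S, ∃ N : ℕ, ∀ n : ℕ, N ≤ n →
    ∃ w : List S, w.length = n ∧ List.Chain' A (a :: (w ++ [b]))

/-- The big images and preimages (BIP) property. -/
def BIP {S : Type*} (A : S → S → Prop) : Prop :=
  ∃ B : Finset S, ∀ a : S, (∃ b ∈ B, A b a) ∧ (∃ b ∈ B, A a b)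

/-- Birkhoff sum `φ^n = φ + φ∘σ + ⋯ + φ∘σ^{n-1}`. -/
def birk {S : Type*} (A : S → S → Prop) (φ : Space A → ℝ) (n : ℕ) (x : Space A) : ℝ :=
  ∑ j ∈ Finset.range n, φ ((shift A)^[j] x)

/-- Local Hölder continuity of a potential. -/
def LocHolder {S : Type*} (A : S → S → Prop) (φ : Space A → ℝ) : Prop :=
  ∃ C : ℝ, 0 < C ∧ ∃ θ : ℝ, 0 < θ ∧ θ < 1 ∧
    ∀ n : ℕ, 1 ≤ n → ∀ w : List S, w.length = n → Allowed A w →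
      ∀ x ∈ Cyl A w, ∀ y ∈ Cyl A w, |φ x - φ y| ≤ C * θ ^ n

/-- The sum over periodic points of period `n` starting at state `a`,
weighted by `e^{φ^n}`. -/
noncomputable def Zper {S : Type*} (A : S → S → Prop) (φ : Space A → ℝ) (a : S) (n : ℕ) :
    ℝ≥0∞ :=
  ∑' x : {x : Space A // (shift A)^[n] x = x ∧ x.1 0 = a},
    ENNReal.ofReal (Real.exp (birk A φ n x.1))

/-- The Gurevič pressure of `φ` (with base state `a`):
`limsup (1/n) log Σ_{σ^n x = x, x ∈ [a]} e^{φ^n(x)}`. -/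
noncomputable def gurevic {S : Type*} (A : S → S → Prop) (φ : Space A → ℝ) (a : S) : EReal :=
  Filter.atTop.limsup fun n : ℕ =>
    (((n : ℝ)⁻¹ : ℝ) : EReal) * ENNReal.log (Zper A φ a n)

/-- Summability of a potential: `sup_x Σ_{σy = x} e^{φ(y)} < ∞`. -/
def SummablePot {S : Type*} (A : S → S → Prop) (φ : Space A → ℝ) : Prop :=
  ∃ C : ℝ, ∀ x : Space A,
    (∑' y : {y : Space A // shift A y = x}, ENNReal.ofReal (Real.exp (φ y.1))) ≤
      ENNReal.ofReal C

/-! ## Skew product extensions -/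

/-- The transition matrix of the skew product extension `T_ψ` on states `S × G`. -/
def skewA {S G : Type*} [Mul G] (A : S → S → Prop) (ψ : S → G) :
    (S × G) → (S × G) → Prop :=
  fun p q => A p.1 q.1 ∧ q.2 = p.2 * ψ p.1

/-- Projection from the skew product shift space to the base shift space. -/
def skewProj {S G : Type*} [Mul G] (A : S → S → Prop) (ψ : S → G) :
    Space (skewA A ψ) → Space A :=
  fun x => ⟨fun n => (x.1 n).1, fun n => (x.2 n).1⟩

/-- The cocycle `ψ_n(x) = ψ(x) ψ(σx) ⋯ ψ(σ^{n-1}x)` (recall `ψ(x)` depends only on `x_0`). -/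
def psiN {S G : Type*} [Monoid G] {A : S → S → Prop} (ψ : S → G) (n : ℕ) (x : Space A) : G :=
  ((List.range n).map fun j => ψ (x.1 j)).prod

/-- The Gurevič pressure of the skew product `T_ψ` with potential `(x,g) ↦ φ(x)`,
with base state `(a, g)`. -/
noncomputable def gurevicSkew {S G : Type*} [Mul G] (A : S → S → Prop) (ψ : S → G)
    (φ : Space A → ℝ) (a : S) (g : G) : EReal :=
  gurevic (skewA A ψ) (fun x => φ (skewProj A ψ x)) (a, g)

/-! ## Abelianization -/

/-- `π : G →* ℤ^d` realizes `ℤ^d` as the torsion-free part of the abelianization of `G`: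
it is surjective and its kernel consists of the elements `g` such that some positive
power of `g` lies in the commutator subgroup. -/
def IsTorsionFreeAbelianization {G : Type*} [Group G] (d : ℕ)
    (π : G →* Multiplicative (Fin d → ℤ)) : Prop :=
  Function.Surjective π ∧
    ∀ g : G, π g = 1 ↔ ∃ n : ℕ, 0 < n ∧ g ^ n ∈ commutator G

/-- `ψ̄ = π ∘ ψ`, viewed additively as a function to `ℤ^d`. -/
def psibar {S G : Type*} [Group G] {d : ℕ} (π : G →* Multiplicative (Fin d → ℤ))
    (ψ : S → G) : S → (Fin d → ℤ) :=
  fun s => Multiplicative.toAdd (π (ψ s))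

/-- Standard inner product `⟨w, v⟩` of `w ∈ ℝ^d` with an integer vector `v ∈ ℤ^d`. -/
def dotZ {d : ℕ} (w : Fin d → ℝ) (v : Fin d → ℤ) : ℝ :=
  ∑ i, w i * (v i : ℝ)

/-- Euclidean norm of an integer vector. -/
noncomputable def normZ {d : ℕ} (v : Fin d → ℤ) : ℝ :=
  Real.sqrt (∑ i, ((v i : ℝ)) ^ 2)

/-- Euclidean norm on `ℝ^d`. -/
noncomputable def normR {d : ℕ} (w : Fin d → ℝ) : ℝ :=
  Real.sqrt (∑ i, (w i) ^ 2)

/-- `δ(φ, f) = sup { r ≥ 0 : φ + r|f| is summable }`, valued in `[0,∞]`. -/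
noncomputable def deltaExp {S : Type*} (A : S → S → Prop) (φ : Space A → ℝ) {d : ℕ}
    (f : S → (Fin d → ℤ)) : ℝ≥0∞ :=
  ⨆ (r : ℝ≥0) (_ : SummablePot A fun x => φ x + (r : ℝ) * normZ (f (x.1 0))), (r : ℝ≥0∞)

/-! ## Amenability -/

/-- A bounded real-valued function. -/
def IsBddFn {G : Type*} (f : G → ℝ) : Prop := ∃ C : ℝ, ∀ g : G, |f g| ≤ C

/-- A right-invariant mean on `ℓ^∞(G)`: a positive normalized linear functional on the
bounded real-valued functions on `G` which is invariant under right translation. -/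
structure RightInvariantMean (G : Type*) [Group G] where
  M : (G → ℝ) → ℝ
  map_add : ∀ f₁ f₂ : G → ℝ, IsBddFn f₁ → IsBddFn f₂ → M (f₁ + f₂) = M f₁ + M f₂
  map_smul : ∀ (c : ℝ) (f : G → ℝ), IsBddFn f → M (c • f) = c * M f
  map_one : M (fun _ => (1 : ℝ)) = 1
  nonneg : ∀ f : G → ℝ, IsBddFn f → (∀ g : G, 0 ≤ f g) → 0 ≤ M f
  right_invariant : ∀ f : G → ℝ, IsBddFn f → ∀ γ : G, M (fun g => f (g * γ)) = M f

/-- A group is amenable if it admits a right-invariant mean on `ℓ^∞(G)`. -/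
def Amenable (G : Type*) [Group G] : Prop := Nonempty (RightInvariantMean G)

/-! ## Transfer operators for skew products -/

/-- `(𝓛_φ^n 1_{[a]×{e}})(o, g) = Σ { e^{φ^n(y)} : σ^n y = o, y ∈ [a], ψ_n(y) = g }`. -/
noncomputable def transferInd {S G : Type*} [Monoid G] (A : S → S → Prop)
    (φ : Space A → ℝ) (ψ : S → G) (a : S) (n : ℕ) (o : Space A) (g : G) : ℝ≥0∞ :=
  ∑' y : {y : Space A // (shift A)^[n] y = o ∧ y.1 0 = a ∧ psiN ψ n y = g},
    ENNReal.ofReal (Real.exp (birk A φ n y.1))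

/-- `(𝓛_φ^n v)(z, g) = Σ_{σ^n y = z} e^{φ^n(y)} v(y, g ψ_n(y)⁻¹)`. -/
noncomputable def transferOp {S G : Type*} [Group G] (A : S → S → Prop)
    (φ : Space A → ℝ) (ψ : S → G) (n : ℕ) (v : Space A → G → ℝ≥0∞)
    (z : Space A) (g : G) : ℝ≥0∞ :=
  ∑' y : {y : Space A // (shift A)^[n] y = z},
    ENNReal.ofReal (Real.exp (birk A φ n y.1)) * v y.1 (g * (psiN ψ n y.1)⁻¹)

/-- The series `ζ_{o,g}(t) = Σ_{n ≥ 1} t^{-n} c_n^{-1} (𝓛_φ^n 1_{[a]×{e}})(o, g)`. -/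
noncomputable def zeta {S G : Type*} [Monoid G] (A : S → S → Prop) (φ : Space A → ℝ)
    (ψ : S → G) (a : S) (c : ℕ → ℝ) (t : ℝ) (o : Space A) (g : G) : ℝ≥0∞ :=
  ∑' n : ℕ, ENNReal.ofReal ((t ^ (n + 1))⁻¹ * (c (n + 1))⁻¹) *
    transferInd A φ ψ a (n + 1) o g

/-- The set `Z` of all preimages of a point `o`. -/
def preOrbit {S : Type*} (A : S → S → Prop) (o : Space A) : Set (Space A) :=
  {z | ∃ n : ℕ, (shift A)^[n] z = o}

/-! ## Topology, measures, Gibbs measures -/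

instance instTopSpace {S : Type*} (A : S → S → Prop) : TopologicalSpace (Space A) :=
  TopologicalSpace.induced (fun x => x.1)
    (@Pi.topologicalSpace ℕ (fun _ => S) (fun _ => ⊥))

instance instMeasSpace {S : Type*} (A : S → S → Prop) : MeasurableSpace (Space A) :=
  borel (Space A)

/-- A Gibbs measure for the potential `Φ`: a shift-invariant Borel probability measure
with the Gibbs property. -/
def IsGibbs {S : Type*} (A : S → S → Prop) (Φ : Space A → ℝ)
    (μ : MeasureTheory.Measure (Space A)) : Prop :=
  MeasureTheory.IsProbabilityMeasure μ ∧
  (∀ s : Set (Space A), MeasurableSet s → μ (shift A ⁻¹' s) = μ s) ∧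
  ∃ A' B' : ℝ, 0 < A' ∧ 0 < B' ∧ ∃ P : ℝ,
    ∀ n : ℕ, 1 ≤ n → ∀ w : List S, w.length = n → Allowed A w →
      ∀ x ∈ Cyl A w,
        ENNReal.ofReal (A' * Real.exp (birk A Φ n x - n * P)) ≤ μ (Cyl A w) ∧
        μ (Cyl A w) ≤ ENNReal.ofReal (B' * Real.exp (birk A Φ n x - n * P))

/-! ## Periodic orbit sums for the equidistribution results -/

/-- `Λ^ψ(n) = {x : σ^n x = x, ψ_n(x) = e}`. -/
def LambdaPer {S G : Type*} [Monoid G] (A : S → S → Prop) (ψ : S → G) (n : ℕ) :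
    Set (Space A) :=
  {x | (shift A)^[n] x = x ∧ psiN ψ n x = 1}

/-- `Λ^ψ(n, o) = {x : σ^n x = o, ψ_n(x) = e}`. -/
def LambdaPre {S G : Type*} [Monoid G] (A : S → S → Prop) (ψ : S → G) (n : ℕ)
    (o : Space A) : Set (Space A) :=
  {x | (shift A)^[n] x = o ∧ psiN ψ n x = 1}

/-- `Π_φ(Λ) = Σ_{x ∈ Λ} e^{φ^n(x)}`, valued in `[0,∞]`. -/
noncomputable def PiSum {S : Type*} (A : S → S → Prop) (φ : Space A → ℝ) (n : ℕ)
    (Λ : Set (Space A)) : ℝ≥0∞ :=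
  ∑' x : Λ, ENNReal.ofReal (Real.exp (birk A φ n x.1))

/-- `∫ g d𝔐_φ(Λ_n)` where `𝔐_φ(Λ_n) = Π_φ(Λ_n)⁻¹ Σ_{x ∈ Λ_n} e^{φ^n(x)} τ_{x,n}`,
using `∫ g dτ_{x,n} = (1/n) g^n(x)`. -/
noncomputable def MVal {S : Type*} (A : S → S → Prop) (φ : Space A → ℝ) (n : ℕ)
    (Λ : Set (Space A)) (g : Space A → ℝ) : ℝ :=
  (∑' x : Λ, Real.exp (birk A φ n x.1) * (birk A g n x.1 / n)) /
    (∑' x : Λ, Real.exp (birk A φ n x.1))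

/-- The sum over all periodic points `x` of period `n` with `ψ_n(x) = e`,
weighted by `e^{φ^n}`. -/
noncomputable def ZperAll {S G : Type*} [Monoid G] (A : S → S → Prop) (φ : Space A → ℝ)
    (ψ : S → G) (n : ℕ) : ℝ≥0∞ :=
  ∑' x : {x : Space A // (shift A)^[n] x = x ∧ psiN ψ n x = 1},
    ENNReal.ofReal (Real.exp (birk A φ n x.1))


/-! ### Comparison of weighted periodic point sums -/

lemma iterate_shift_apply {S : Type*} (A : S → S → Prop) (n k : ℕ) (x : Space A) :
    ((shift A)^[n] x).1 k = x.1 (k + n) := by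
  induction n generalizing x with
  | zero => rfl
  | succ n ih =>
    rw [Function.iterate_succ_apply, ih]
    rfl

/-- A map between shift spaces that commutes with the shifts, carries paths starting at `a` to
paths starting at `b`, is injective on the former, and preserves the weights of periodic points
yields an inequality of Gurevič pressures: the inequality already holds for each period. -/
lemma gurevic_le_of_map {S T : Type*} {A : S → S → Prop} {B : T → T → Prop}
    {φ : Space A → ℝ} {χ : Space B → ℝ} {a : S} {b : T} (f : Space A → Space B)
    (hcomm : Function.Semiconj f (shift A) (shift B))
    (hbase : ∀ x : Space A, x.1 0 = a → (f x).1 0 = b)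
    (hinj : ∀ x y : Space A, x.1 0 = a → y.1 0 = a → f x = f y → x = y)
    (hweight : ∀ (n : ℕ) (x : Space A), (shift A)^[n] x = x → birk A φ n x = birk B χ n (f x)) :
    gurevic A φ a ≤ gurevic B χ b := by
  refine Filter.limsup_le_limsup (Filter.Eventually.of_forall fun n => ?_)
  refine mul_le_mul_of_nonneg_left (ENNReal.log_monotone ?_)
    (EReal.coe_nonneg.2 (inv_nonneg.2 n.cast_nonneg))
  let F : {x : Space A // (shift A)^[n] x = x ∧ x.1 0 = a} →
      {y : Space B // (shift B)^[n] y = y ∧ y.1 0 = b} := fun x =>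
    ⟨f x.1, by rw [← (hcomm.iterate_right n).eq, x.2.1], hbase x.1 x.2.2⟩
  have hF : Function.Injective F := fun x y h =>
    Subtype.ext (hinj x.1 y.1 x.2.2 y.2.2 (congrArg Subtype.val h))
  calc Zper A φ a n
      = ∑' x, ENNReal.ofReal (Real.exp (birk B χ n (F x).1)) :=
        tsum_congr fun x => by rw [hweight n x.1 x.2.1]
    _ ≤ Zper B χ b n := ENNReal.tsum_comp_le_tsum_of_injective hF
        fun y => ENNReal.ofReal (Real.exp (birk B χ n y.1))

/-! ### Skew products over the same base -/

lemma skewProj_semiconj {S G : Type*} [Mul G] (A : S → S → Prop) (ψ : S → G) :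
    Function.Semiconj (skewProj A ψ) (shift (skewA A ψ)) (shift A) := fun _ => rfl

/-- The group coordinate of a path in a skew product is determined by its initial value and the
base path. -/
lemma skewProj_inj {S G : Type*} [Mul G] {A : S → S → Prop} {ψ : S → G}
    {x y : Space (skewA A ψ)} (h0 : x.1 0 = y.1 0)
    (h : skewProj A ψ x = skewProj A ψ y) : x = y := by
  have h1 : ∀ n, (x.1 n).1 = (y.1 n).1 := fun n => congrFun (congrArg Subtype.val h) n
  refine Subtype.ext (funext fun n => ?_)
  induction n with
  | zero => exact h0
  | succ n ih =>
    refine Prod.ext (h1 _) ?_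
    rw [(x.2 n).2, (y.2 n).2, ih]

/-- The map `(x, g) ↦ (x, π g)` from the skew product by `ψ` to the skew product by `π ∘ ψ`. -/
def skewMap {S G H : Type*} [Group G] [Group H] (A : S → S → Prop) (ψ : S → G) (π : G →* H) :
    Space (skewA A ψ) → Space (skewA A fun s => π (ψ s)) :=
  fun x => ⟨fun n => ((x.1 n).1, π (x.1 n).2),
    fun n => ⟨(x.2 n).1, by
      change π (x.1 (n + 1)).2 = π (x.1 n).2 * π (ψ (x.1 n).1)
      rw [(x.2 n).2, map_mul]⟩⟩

lemma birk_skew {S G : Type*} [Mul G] (A : S → S → Prop) (ψ : S → G) (φ : Space A → ℝ)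
    (n : ℕ) (x : Space (skewA A ψ)) :
    birk (skewA A ψ) (fun x => φ (skewProj A ψ x)) n x = birk A φ n (skewProj A ψ x) :=
  Finset.sum_congr rfl fun j _ =>
    congrArg φ (((skewProj_semiconj A ψ).iterate_right j).eq x)

lemma dotZ_add {d : ℕ} (w : Fin d → ℝ) (u v : Fin d → ℤ) :
    dotZ w (u + v) = dotZ w u + dotZ w v := by
  simp [dotZ, mul_add, Finset.sum_add_distrib]

/-- The Birkhoff sum of `⟨w, ψ̄⟩` telescopes to the displacement of the `ℤ^d`-coordinate. -/
lemma sum_dotZ_psibar {S G : Type*} [Group G] {d : ℕ} (A : S → S → Prop) (ψ : S → G)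
    (π : G →* Multiplicative (Fin d → ℤ)) (w : Fin d → ℝ)
    (x : Space (skewA A fun s => π (ψ s))) (n : ℕ) :
    dotZ w (x.1 0).2.toAdd + ∑ j ∈ Finset.range n, dotZ w (psibar π ψ (x.1 j).1) =
      dotZ w (x.1 n).2.toAdd := by
  induction n with
  | zero => simp
  | succ n ih =>
    rw [Finset.sum_range_succ, ← add_assoc, ih, (x.2 n).2, toAdd_mul, dotZ_add]
    rfl

/-- Along a periodic point of the `ℤ^d`-extension, the term `⟨w, ψ̄⟩` does not contribute. -/
lemma birk_add_dotZ_of_periodic {S G : Type*} [Group G] {d : ℕ} (A : S → S → Prop)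
    (φ : Space A → ℝ) (ψ : S → G) (π : G →* Multiplicative (Fin d → ℤ)) (w : Fin d → ℝ)
    (n : ℕ) (x : Space (skewA A fun s => π (ψ s)))
    (hx : (shift (skewA A fun s => π (ψ s)))^[n] x = x) :
    birk A (fun x => φ x + dotZ w (psibar π ψ (x.1 0))) n (skewProj A _ x) =
      birk A φ n (skewProj A _ x) := by
  have hn : x.1 n = x.1 0 := by
    have := iterate_shift_apply _ n 0 x
    rw [hx, zero_add] at this
    exact this.symm
  have hs := sum_dotZ_psibar A ψ π w x n
  rw [hn, add_eq_left] at hs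
  simp only [birk, Finset.sum_add_distrib, iterate_shift_apply, zero_add]
  exact add_eq_left.2 hs

/-- `P_G(φ, T_ψ) ≤ P_G(φ, T_ψ̄)` and, for every `w ∈ ℝ^d`,
`P_G(φ, T_ψ̄) ≤ P_G(φ + ⟨w, ψ̄⟩, σ)`. -/
theorem statement_0 {S G : Type*} [Countable S] [Group G] [Countable G]
    (A : S → S → Prop) (φ : Space A → ℝ) (ψ : S → G)
    (d : ℕ) (π : G →* Multiplicative (Fin d → ℤ))
    (hπ : IsTorsionFreeAbelianization d π)
    (hσ : TopTransitive A)
    (hT : TopTransitive (skewA A ψ))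
    (hφ : LocHolder A φ) :
    ∀ a : S,
      gurevicSkew A ψ φ a 1 ≤ gurevicSkew A (fun s => π (ψ s)) φ a 1 ∧
        ∀ w : Fin d → ℝ,
          gurevicSkew A (fun s => π (ψ s)) φ a 1 ≤
            gurevic A (fun x => φ x + dotZ w (psibar π ψ (x.1 0))) a := by
  intro a
  refine ⟨gurevic_le_of_map (skewMap A ψ π) (fun _ => rfl) (fun x hx => ?_)
    (fun x y hx hy h => ?_) (fun n x _ => ?_), fun w => gurevic_le_of_map (skewProj A _)
    (skewProj_semiconj A _) (fun x hx => congrArg Prod.fst hx)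
    (fun x y hx hy h => skewProj_inj (hx.trans hy.symm) h) (fun n x hx => ?_)⟩
  · change ((x.1 0).1, π (x.1 0).2) = (a, 1)
    rw [hx, map_one]
  · -- `skewMap` preserves the base path.
    exact skewProj_inj (hx.trans hy.symm) (congrArg (skewProj A fun s => π (ψ s)) h)
  · rw [birk_skew, birk_skew]
    rfl
  · rw [birk_skew, birk_add_dotZ_of_periodic A φ ψ π w n x hx]

end Gurevic
end

section
/- Let σ : Σ → Σ be a one-sided countable state Markov shift, G a countable group, ψ : Σ → G depending only on the first coordinate with T_ψ topologically transitive, φ : Σ → ℝ locally Hölder continuous, and set ρ = e^{P_G(φ,T_ψ)} < ∞. Let (c_n) be positive reals and define ζ_{o,g}(t) = Σ_{n≥1} t^{−n} c_n^{−1} (𝓛_φ^n 1_{[a]×{e}})(o,g) for o ∈ [a], assumed finite for all t > ρ and all g ∈ G. Then for every state a there exists B > 0 such that for all o, o' ∈ [a], all g ∈ G and all t > ρ: e^{−B} ζ_{o,g}(t) ≤ ζ_{o',g}(t) ≤ e^{B} ζ_{o,g}(t). -/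
/-!
The comparison holds term by term. For `o, o' ∈ [a]` a preimage `y` of `o'` under `σ^n` can be
continued by `o` instead of `o'` after its first `n` symbols: the transition stays allowed because
`o` and `o'` start with the same state, and the first symbol and `ψ_n` are unchanged because they
only see the first `n` symbols. This injects the preimages of `o'` into those of `o`
(`transferInd_le`). Since the two points share `n` symbols, local Hölder continuity gives bounded
distortion, `|φ^n(y) - φ^n(y')| ≤ C (θ + ⋯ + θ^n) ≤ C / (1 - θ)` (`birk_dist`), uniformly in `n`.
Hence `B = C / (1 - θ)` works for every choice of the nonnegative weights `t^{-n} c_n^{-1}`, and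
the reverse inequality follows by exchanging `o` and `o'`.
-/

open scoped ENNReal NNReal BigOperators
open Filter

namespace Gurevic

theorem shift_iterate_apply {S : Type*} (A : S → S → Prop) (n : ℕ) (x : Space A) (i : ℕ) :
    ((shift A)^[n] x).1 i = x.1 (i + n) := by
  induction n generalizing x with
  | zero => rfl
  | succ n ih =>
    rw [Function.iterate_succ_apply, ih]
    change x.1 (i + n + 1) = x.1 (i + (n + 1))
    rw [Nat.add_assoc]

theorem birk_succ {S : Type*} (A : S → S → Prop) (φ : Space A → ℝ) (n : ℕ) (x : Space A) :
    birk A φ (n + 1) x = φ x + birk A φ n (shift A x) := by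
  unfold birk
  rw [Finset.sum_range_succ', add_comm]
  rfl

/-- The Hölder estimate in terms of the number of common initial symbols, rather than of a
word whose cylinder contains both points. -/
theorem holder_of_agree {S : Type*} {A : S → S → Prop} {φ : Space A → ℝ} {C θ : ℝ}
    (h : ∀ n : ℕ, 1 ≤ n → ∀ w : List S, w.length = n → Allowed A w →
      ∀ x ∈ Cyl A w, ∀ y ∈ Cyl A w, |φ x - φ y| ≤ C * θ ^ n)
    {n : ℕ} (hn : 1 ≤ n) {x y : Space A} (hxy : ∀ i < n, x.1 i = y.1 i) :
    |φ x - φ y| ≤ C * θ ^ n := by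
  refine h n hn ((List.range n).map x.1) (by simp) ?_ x ?_ y ?_
  · change List.IsChain A _
    rw [List.isChain_iff_getElem]
    intro i hi
    simpa using x.2 i
  · intro i hi
    simp
  · intro i hi
    simp only [List.length_map, List.length_range] at hi
    simpa using (hxy i hi).symm

/-- Bounded distortion: Birkhoff sums of length `n` of two points with the same first `n`
symbols differ by at most a partial geometric sum. -/
theorem birk_dist {S : Type*} {A : S → S → Prop} {φ : Space A → ℝ} {C θ : ℝ}
    (h : ∀ n : ℕ, 1 ≤ n → ∀ w : List S, w.length = n → Allowed A w →
      ∀ x ∈ Cyl A w, ∀ y ∈ Cyl A w, |φ x - φ y| ≤ C * θ ^ n)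
    (n : ℕ) (x y : Space A) (hxy : ∀ i < n, x.1 i = y.1 i) :
    |birk A φ n x - birk A φ n y| ≤ C * ∑ j ∈ Finset.range n, θ ^ (j + 1) := by
  induction n generalizing x y with
  | zero => simp [birk]
  | succ n ih =>
    have h1 : |φ x - φ y| ≤ C * θ ^ (n + 1) := holder_of_agree h (Nat.succ_pos n) hxy
    have h2 := ih (shift A x) (shift A y) (fun i hi => hxy (i + 1) (by omega))
    rw [birk_succ, birk_succ, Finset.sum_range_succ, mul_add]
    rw [abs_le] at *
    constructor <;> linarith [h1.1, h1.2, h2.1, h2.2]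

/-- The point whose first `n` symbols are those of `y` and whose remaining symbols are `o`. -/
def splice {S : Type*} {A : S → S → Prop} (n : ℕ) (y o : Space A)
    (h : y.1 n = o.1 0) : Space A :=
  ⟨fun i => if i < n then y.1 i else o.1 (i - n), fun i => by
    by_cases h1 : i + 1 < n
    · simpa [h1, show i < n by omega] using y.2 i
    · by_cases h2 : i < n
      · obtain rfl : n = i + 1 := by omega
        simpa [← h] using y.2 i
      · simpa [h1, h2, show i + 1 - n = i - n + 1 by omega] using o.2 (i - n)⟩

theorem splice_lt {S : Type*} {A : S → S → Prop} {n : ℕ} {y o : Space A}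
    (h : y.1 n = o.1 0) {i : ℕ} (hi : i < n) : (splice n y o h).1 i = y.1 i :=
  if_pos hi

theorem shift_splice {S : Type*} {A : S → S → Prop} {n : ℕ} {y o : Space A}
    (h : y.1 n = o.1 0) : (shift A)^[n] (splice n y o h) = o := by
  apply Subtype.ext
  funext i
  rw [shift_iterate_apply]
  simp [splice]

theorem psiN_congr {S G : Type*} [Monoid G] {A : S → S → Prop} (ψ : S → G) {n : ℕ}
    {x y : Space A} (h : ∀ i < n, x.1 i = y.1 i) : psiN ψ n x = psiN ψ n y := by
  unfold psiN
  congr 1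
  apply List.map_congr_left
  intro i hi
  rw [h i (List.mem_range.1 hi)]

/-- Splicing injects the `σ^(n+1)`-preimages of `o'` into those of `o`, keeping the first symbol
and the cocycle and changing each weight by a factor of at most `e^B`. -/
theorem transferInd_le {S G : Type*} [Monoid G] {A : S → S → Prop} {φ : Space A → ℝ}
    (ψ : S → G) (a : S) {B : ℝ} (n : ℕ)
    (hB : ∀ x y : Space A, (∀ i < n + 1, x.1 i = y.1 i) →
      |birk A φ (n + 1) x - birk A φ (n + 1) y| ≤ B)
    {o o' : Space A} (ho : o ∈ CylS A a) (ho' : o' ∈ CylS A a) (g : G) :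
    transferInd A φ ψ a (n + 1) o' g ≤
      ENNReal.ofReal (Real.exp B) * transferInd A φ ψ a (n + 1) o g := by
  have key : ∀ y : Space A, (shift A)^[n + 1] y = o' → y.1 (n + 1) = o.1 0 := by
    intro y hy
    have h0 := shift_iterate_apply A (n + 1) y 0
    rw [hy, Nat.zero_add] at h0
    exact h0.symm.trans (Eq.trans ho' ho.symm)
  let f : {y : Space A // (shift A)^[n + 1] y = o' ∧ y.1 0 = a ∧ psiN ψ (n + 1) y = g} →
      {y : Space A // (shift A)^[n + 1] y = o ∧ y.1 0 = a ∧ psiN ψ (n + 1) y = g} :=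
    fun y => ⟨splice (n + 1) y.1 o (key _ y.2.1), shift_splice _,
      (splice_lt _ (Nat.succ_pos n)).trans y.2.2.1,
      (psiN_congr ψ fun _ hi => splice_lt _ hi).trans y.2.2.2⟩
  have hf : Function.Injective f := by
    intro y z hyz
    have e : splice (n + 1) y.1 o (key _ y.2.1) = splice (n + 1) z.1 o (key _ z.2.1) :=
      congrArg Subtype.val hyz
    apply Subtype.ext
    apply Subtype.ext
    funext i
    by_cases hi : i < n + 1
    · rw [← splice_lt (key _ y.2.1) hi, e, splice_lt _ hi]
    · -- beyond the prefix both points are continued by `o'`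
      have hy := shift_iterate_apply A (n + 1) y.1 (i - (n + 1))
      have hz := shift_iterate_apply A (n + 1) z.1 (i - (n + 1))
      rw [y.2.1, Nat.sub_add_cancel (by omega)] at hy
      rw [z.2.1, Nat.sub_add_cancel (by omega)] at hz
      exact hy.symm.trans hz
  unfold transferInd
  rw [← ENNReal.tsum_mul_left]
  refine le_trans (ENNReal.tsum_le_tsum fun y => ?_)
    (ENNReal.tsum_comp_le_tsum_of_injective hf _)
  rw [← ENNReal.ofReal_mul (Real.exp_pos _).le, ← Real.exp_add]
  apply ENNReal.ofReal_le_ofReal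
  apply Real.exp_le_exp.2
  have := (abs_le.1 (hB y.1 (f y).1 fun i hi => (splice_lt (key _ y.2.1) hi).symm)).2
  linarith

/-- comparison of the series `ζ_{o,g}(t)` and `ζ_{o',g}(t)` for `o, o' ∈ [a]`. -/
theorem statement_4 {S G : Type*} [Countable S] [Group G] [Countable G]
    (A : S → S → Prop) (φ : Space A → ℝ) (ψ : S → G)
    (hT : TopTransitive (skewA A ψ))
    (hφ : LocHolder A φ)
    (P : ℝ) (hP : ∀ (b : S) (h : G), gurevicSkew A ψ φ b h = (P : EReal))
    (c : ℕ → ℝ) (hc : ∀ n : ℕ, 0 < c n) (a : S)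
    (hfin : ∀ o ∈ CylS A a, ∀ (g : G) (t : ℝ), Real.exp P < t →
      zeta A φ ψ a c t o g < ⊤) :
    ∃ B : ℝ, 0 < B ∧ ∀ o ∈ CylS A a, ∀ o' ∈ CylS A a, ∀ (g : G) (t : ℝ), Real.exp P < t →
      ENNReal.ofReal (Real.exp (-B)) * zeta A φ ψ a c t o g ≤ zeta A φ ψ a c t o' g ∧
        zeta A φ ψ a c t o' g ≤ ENNReal.ofReal (Real.exp B) * zeta A φ ψ a c t o g := by
  obtain ⟨C, hC, θ, hθ0, hθ1, hH⟩ := hφ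
  have hpos : 0 < 1 - θ := by linarith
  have hB : ∀ n (x y : Space A), (∀ i < n, x.1 i = y.1 i) →
      |birk A φ n x - birk A φ n y| ≤ C * (1 - θ)⁻¹ := by
    intro n x y hxy
    refine (birk_dist hH n x y hxy).trans (mul_le_mul_of_nonneg_left ?_ hC.le)
    have hs := tsum_geometric_of_lt_one hθ0.le hθ1
    rw [← hs]
    refine le_trans (Finset.sum_le_sum fun j _ =>
      pow_le_pow_of_le_one hθ0.le hθ1.le (Nat.le_succ j)) ?_
    exact (summable_geometric_of_lt_one hθ0.le hθ1).sum_le_tsum _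
      fun j _ => pow_nonneg hθ0.le j
  have main : ∀ o ∈ CylS A a, ∀ o' ∈ CylS A a, ∀ (g : G) (t : ℝ),
      zeta A φ ψ a c t o' g ≤
        ENNReal.ofReal (Real.exp (C * (1 - θ)⁻¹)) * zeta A φ ψ a c t o g := by
    intro o ho o' ho' g t
    unfold zeta
    rw [← ENNReal.tsum_mul_left]
    refine ENNReal.tsum_le_tsum fun n => ?_
    rw [mul_left_comm]
    gcongr
    exact transferInd_le ψ a n (hB (n + 1)) ho ho' g
  refine ⟨C * (1 - θ)⁻¹, by positivity, fun o ho o' ho' g t _ => ⟨?_, main o ho o' ho' g t⟩⟩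
  calc _ ≤ ENNReal.ofReal (Real.exp (-(C * (1 - θ)⁻¹))) *
        (ENNReal.ofReal (Real.exp (C * (1 - θ)⁻¹)) * zeta A φ ψ a c t o' g) := by
        gcongr
        exact main o' ho' o ho g t
    _ = zeta A φ ψ a c t o' g := by
        rw [← mul_assoc, ← ENNReal.ofReal_mul (Real.exp_pos _).le, ← Real.exp_add]
        simp


end Gurevic
end

section
/- Let σ : Σ → Σ be a one-sided countable state Markov shift, G a countable group, ψ : Σ → G depending only on the first coordinate with T_ψ topologically transitive, φ : Σ → ℝ locally Hölder continuous, ρ = e^{P_G(φ,T_ψ)} < ∞. Let (c_n) be positive reals with lim_{n→∞} c_n/c_{n+k} = 1 for every fixed k ≥ 1, and for o ∈ [a] set ζ_{o,g}(t) = Σ_{n≥1} t^{−n} c_n^{−1} (𝓛_φ^n 1_{[a]×{e}})(o,g), assumed finite for all t > ρ and all g ∈ G. Then for every ρ' > ρ, every state a and every g ∈ G: 0 < inf_{o ∈ [a]} inf_{ρ < t ≤ ρ'} ζ_{o,g}(t)/ζ_{o,e}(t) ≤ sup_{o ∈ [a]} sup_{ρ < t ≤ ρ'} ζ_{o,g}(t)/ζ_{o,e}(t)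 < ∞. -/
/-!
The comparison `ζ_{o,g}(t) ≤ K ζ_{o,h}(t)`, with `K` independent of `o ∈ [a]` and of `t ≤ ρ'`,
holds for every pair `g, h`; the theorem is this comparison for `(g, 1)` and `(1, g)`.

To prove it, take a loop at `a` of some length `k ≥ 1` along which `ψ` multiplies to `h g⁻¹`.
Prepending it turns a preimage of `o` counted in `ζ_{o,g}` into one counted in `ζ_{o,h}`,
injectively. The Birkhoff sum changes by an amount bounded below, because `φ` has bounded
variation on one-letter cylinders (`prepend_bound`, `transfer_le`), and the factor
`t^{-k} c_n / c_{n+k}` is bounded below because `c_n / c_{n+k} → 1` (`zeta_le`).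

The loop comes from a dense orbit of the skew product (`exists_loop`). Density alone does not
make a one-sided orbit return to a state, but the pressure being real forces every state of
the skew product to lie on a periodic orbit (`exists_periodic`), and an orbit that shadows
arbitrarily long pieces of that periodic orbit visits the state at arbitrarily late times
(`visits_late`).
-/

open scoped ENNReal NNReal BigOperators
open Filter

namespace Gurevic

/-! ### Recurrence of dense orbits -/

section Recurrence

variable {S : Type*} {A : S → S → Prop}

lemma shift_iter (x : Space A) (n j : ℕ) : ((shift A)^[n] x).1 j = x.1 (j + n) := by
  induction n generalizing x with
  | zero => rfl
  | succ n ih =>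
    rw [Function.iterate_succ_apply, ih]
    change x.1 (j + n + 1) = _
    rfl

/-- If no periodic point of positive period starts at `p`, every partition sum vanishes and the
pressure is `-∞`. -/
lemma exists_periodic {φ : Space A → ℝ} {p : S} {P : ℝ} (h : gurevic A φ p = (P : EReal)) :
    ∃ n : ℕ, 1 ≤ n ∧ ∃ z : Space A, (shift A)^[n] z = z ∧ z.1 0 = p := by
  by_contra hcon
  push Not at hcon
  have hbot : gurevic A φ p = ⊥ := by
    unfold gurevic
    have : (fun n : ℕ => (((n : ℝ)⁻¹ : ℝ) : EReal) * ENNReal.log (Zper A φ p n))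
        =ᶠ[atTop] fun _ => (⊥ : EReal) := by
      filter_upwards [eventually_ge_atTop 1] with n hn
      have hz : Zper A φ p n = 0 := by
        unfold Zper
        have : IsEmpty {x : Space A // (shift A)^[n] x = x ∧ x.1 0 = p} :=
          ⟨fun x => hcon n hn x.1 x.2.1 x.2.2⟩
        exact tsum_empty
      rw [hz, ENNReal.log_zero]
      apply EReal.coe_mul_bot_of_pos
      have : (0 : ℝ) < n := by exact_mod_cast hn
      positivity
    rw [limsup_congr this, limsup_const]
  rw [hbot] at h
  exact absurd h.symm (EReal.coe_ne_bot P)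

lemma periodic_visits {z : Space A} {n : ℕ} (hz : (shift A)^[n] z = z) (B : ℕ) :
    z.1 (B * n) = z.1 0 := by
  induction B with
  | zero => simp
  | succ B ih =>
    rw [← ih, Nat.succ_mul, ← shift_iter, hz]

/-- A dense orbit visits a periodic state at arbitrarily late times, since it has to follow
arbitrarily long initial words of the periodic orbit. -/
lemma visits_late {x : Space A}
    (hx : ∀ w : List S, (Cyl A w).Nonempty → ∃ n : ℕ, (shift A)^[n] x ∈ Cyl A w)
    {p : S} {n : ℕ} (hn : 1 ≤ n) {z : Space A} (hz : (shift A)^[n] z = z) (hp : z.1 0 = p)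
    (B : ℕ) : ∃ m, B ≤ m ∧ x.1 m = p := by
  obtain ⟨m, hm⟩ := hx ((List.range (B * n + 1)).map z.1) ⟨z, by
    intro i hi
    simp⟩
  have h1 := hm (B * n) (by simp)
  rw [shift_iter] at h1
  refine ⟨B * n + m, by nlinarith, ?_⟩
  rw [h1, ← hp, ← periodic_visits hz B]
  simp

end Recurrence

/-! ### Loops and prepending them -/

section Loops

variable {S G : Type*} [Group G] {A : S → S → Prop} {φ : Space A → ℝ} {ψ : S → G}

lemma skew_snd (x : Space (skewA A ψ)) (n : ℕ) :
    (x.1 n).2 = (x.1 0).2 * psiN ψ n (skewProj A ψ x) := by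
  induction n with
  | zero => simp [psiN]
  | succ n ih =>
    rw [(x.2 n).2, ih]
    simp [psiN, List.range_succ, mul_assoc, skewProj]

/-- Irreducibility of the skew product at the state `a`: some path of positive length leads from
`a` to `a` with `ψ`-product `γ`. -/
lemma exists_loop (hT : TopTransitive (skewA A ψ)) {P : ℝ}
    (hP : ∀ (b : S) (h : G), gurevicSkew A ψ φ b h = (P : EReal)) (a : S) (γ : G) :
    ∃ (k : ℕ) (x : Space A), 1 ≤ k ∧ x.1 0 = a ∧ x.1 k = a ∧ psiN ψ k x = γ := by
  obtain ⟨x, hx⟩ := hT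
  have key : ∀ (g : G) (B : ℕ), ∃ m, B ≤ m ∧ x.1 m = (a, g) := by
    intro g B
    obtain ⟨n, hn, z, hz, hz0⟩ := exists_periodic (hP a g)
    exact visits_late hx hn hz hz0 B
  obtain ⟨i, -, hi⟩ := key 1 0
  obtain ⟨m, hm, hxm⟩ := key γ (i + 1)
  obtain ⟨k, rfl⟩ : ∃ k, m = k + i := ⟨m - i, by omega⟩
  refine ⟨k, skewProj A ψ ((shift (skewA A ψ))^[i] x), by omega, ?_, ?_, ?_⟩
  · simp [skewProj, shift_iter, hi]
  · simp [skewProj, shift_iter, hxm]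
  · have := skew_snd ((shift (skewA A ψ))^[i] x) k
    rw [shift_iter, shift_iter, hxm, zero_add, hi] at this
    simpa using this.symm

/-- The point `x_0 ⋯ x_{k-1} y`, given that the letter `x_k` is `y_0`. -/
def prepend (k : ℕ) (x y : Space A) (h : x.1 k = y.1 0) : Space A :=
  ⟨fun j => if j < k then x.1 j else y.1 (j - k), fun n => by
    beta_reduce
    rcases lt_trichotomy (n + 1) k with h1 | h1 | h1
    · rw [if_pos (by omega), if_pos h1]
      exact x.2 n
    · rw [if_pos (by omega), if_neg (by omega), h1, Nat.sub_self, ← h, ← h1]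
      exact x.2 n
    · rw [if_neg (by omega), if_neg (by omega), show n + 1 - k = n - k + 1 by omega]
      exact y.2 _⟩

lemma prepend_lt {k : ℕ} {x y : Space A} (h : x.1 k = y.1 0) {j : ℕ} (hj : j < k) :
    (prepend k x y h).1 j = x.1 j := if_pos hj

lemma shift_prepend {k : ℕ} {x y : Space A} (h : x.1 k = y.1 0) :
    (shift A)^[k] (prepend k x y h) = y := by
  apply Subtype.ext
  funext j
  rw [shift_iter]
  simp [prepend]

lemma psiN_add (k n : ℕ) (z : Space A) :
    psiN ψ (k + n) z = psiN ψ k z * psiN ψ n ((shift A)^[k] z) := by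
  simp only [psiN, List.range_add, List.map_append, List.prod_append, List.map_map]
  congr 3
  funext j
  simp [shift_iter, add_comm]

lemma psiN_prepend {k : ℕ} {x y : Space A} (h : x.1 k = y.1 0) :
    psiN ψ k (prepend k x y h) = psiN ψ k x := by
  unfold psiN
  congr 1
  apply List.map_congr_left
  intro j hj
  rw [prepend_lt h (List.mem_range.1 hj)]

lemma birk_add (k n : ℕ) (z : Space A) :
    birk A φ (k + n) z = birk A φ k z + birk A φ n ((shift A)^[k] z) := by
  unfold birk
  rw [Finset.sum_range_add]
  congr 1
  refine Finset.sum_congr rfl fun j _ => ?_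
  rw [← Function.iterate_add_apply, add_comm]

/-- Only the variation on one-letter cylinders is used: `k` is fixed, so an error proportional
to `k` is harmless. -/
lemma prepend_bound (hφ : LocHolder A φ) (k : ℕ) (x : Space A) :
    ∃ M : ℝ, ∀ (y : Space A) (h : x.1 k = y.1 0), M ≤ birk A φ k (prepend k x y h) := by
  obtain ⟨C, -, θ, -, -, hv⟩ := hφ
  refine ⟨∑ j ∈ Finset.range k, (φ ((shift A)^[j] x) - C * θ ^ 1), fun y h => ?_⟩
  refine Finset.sum_le_sum fun j hj => ?_
  have hm : ∀ u : Space A, u.1 0 = x.1 j → u ∈ Cyl A [x.1 j] := by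
    intro u hu i hi
    obtain rfl : i = 0 := by simpa using hi
    simpa using hu
  have := hv 1 le_rfl [x.1 j] rfl (List.isChain_singleton _) ((shift A)^[j] x)
    (hm _ (by simp [shift_iter])) ((shift A)^[j] (prepend k x y h))
    (hm _ (by rw [shift_iter, zero_add, prepend_lt h (Finset.mem_range.1 hj)]))
  linarith [(abs_le.1 this).2]

lemma transfer_le {k : ℕ} {x : Space A} {a : S} (hk : 1 ≤ k) (hx0 : x.1 0 = a)
    (hxk : x.1 k = a) {M : ℝ}
    (hM : ∀ (y : Space A) (h : x.1 k = y.1 0), M ≤ birk A φ k (prepend k x y h))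
    (n : ℕ) (o : Space A) (g : G) :
    ENNReal.ofReal (Real.exp M) * transferInd A φ ψ a n o g ≤
      transferInd A φ ψ a (n + k) o (psiN ψ k x * g) := by
  unfold transferInd
  rw [← ENNReal.tsum_mul_left]
  let F : {y : Space A // (shift A)^[n] y = o ∧ y.1 0 = a ∧ psiN ψ n y = g} →
      {y : Space A // (shift A)^[n + k] y = o ∧ y.1 0 = a ∧
        psiN ψ (n + k) y = psiN ψ k x * g} := fun y =>
    ⟨prepend k x y.1 (hxk.trans y.2.2.1.symm), by
      refine ⟨?_, ?_, ?_⟩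
      · rw [Function.iterate_add_apply, shift_prepend, y.2.1]
      · rw [prepend_lt _ (by omega), hx0]
      · rw [add_comm, psiN_add, psiN_prepend, shift_prepend, y.2.2.2]⟩
  have hF : Function.Injective F := by
    intro y y' hyy
    have h1 := congrArg (fun u => (shift A)^[k] u.1) hyy
    simp only [F, shift_prepend] at h1
    exact Subtype.ext h1
  refine le_trans (ENNReal.tsum_le_tsum fun y => ?_)
    (ENNReal.tsum_comp_le_tsum_of_injective hF _)
  rw [← ENNReal.ofReal_mul (Real.exp_pos _).le, ← Real.exp_add]
  refine ENNReal.ofReal_le_ofReal (Real.exp_le_exp.2 ?_)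
  simp only [F]
  rw [add_comm n k, birk_add, shift_prepend]
  linarith [hM y.1 (hxk.trans y.2.2.1.symm)]

end Loops

/-! ### Comparison of the series -/

lemma ratio_bound {c : ℕ → ℝ} (hc : ∀ n, 0 < c n) {k : ℕ}
    (h : Tendsto (fun n : ℕ => c n / c (n + k)) atTop (nhds 1)) :
    ∃ δ : ℝ, 0 < δ ∧ ∀ n, δ ≤ c n / c (n + k) := by
  obtain ⟨N, hN⟩ := eventually_atTop.1 (h.eventually (lt_mem_nhds (by norm_num : (1 / 2 : ℝ) < 1)))
  -- the finitely many terms before `N` are handled by their minimum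
  obtain ⟨m, -, hm⟩ := Finset.exists_min_image (Finset.range (N + 1))
    (fun n => c n / c (n + k)) ⟨0, by simp⟩
  refine ⟨min (1 / 2) (c m / c (m + k)), lt_min (by norm_num) (div_pos (hc _) (hc _)), ?_⟩
  intro n
  rcases le_total n N with hn | hn
  · exact (min_le_right _ _).trans (hm n (by simp; omega))
  · exact (min_le_left _ _).trans (hN n hn).le

section Comparison

variable {S G : Type*} [Group G] {A : S → S → Prop} {φ : Space A → ℝ} {ψ : S → G}

lemma zeta_le (hT : TopTransitive (skewA A ψ)) (hφ : LocHolder A φ) {P : ℝ}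
    (hP : ∀ (b : S) (h : G), gurevicSkew A ψ φ b h = (P : EReal))
    {c : ℕ → ℝ} (hc : ∀ n : ℕ, 0 < c n)
    (hcr : ∀ k : ℕ, 1 ≤ k → Tendsto (fun n : ℕ => c n / c (n + k)) atTop (nhds 1))
    (a : S) {r : ℝ} (hr : 0 < r) (g h : G) :
    ∃ κ : ℝ, 0 < κ ∧ ∀ (o : Space A) (t : ℝ), 0 < t → t ≤ r →
      ENNReal.ofReal κ * zeta A φ ψ a c t o g ≤ zeta A φ ψ a c t o h := by
  obtain ⟨k, x, hk, hx0, hxk, hγ⟩ := exists_loop hT hP a (h * g⁻¹)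
  obtain ⟨M, hM⟩ := prepend_bound hφ k x
  obtain ⟨δ, hδ, hδ'⟩ := ratio_bound hc (hcr k hk)
  refine ⟨δ * (r ^ k)⁻¹ * Real.exp M, by positivity, fun o t ht htr => ?_⟩
  unfold zeta
  rw [← ENNReal.tsum_mul_left]
  refine le_trans (ENNReal.tsum_le_tsum fun n => ?_)
    (ENNReal.tsum_comp_le_tsum_of_injective (add_left_injective k) _)
  have h1 := transfer_le (φ := φ) (ψ := ψ) hk hx0 hxk hM (n + 1) o g
  rw [hγ, inv_mul_cancel_right] at h1
  have hcoef : δ * (r ^ k)⁻¹ * ((t ^ (n + 1))⁻¹ * (c (n + 1))⁻¹) ≤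
      (t ^ (n + k + 1))⁻¹ * (c (n + k + 1))⁻¹ := by
    have h2 : (r ^ k)⁻¹ ≤ (t ^ k)⁻¹ := by gcongr
    have h3 := hδ' (n + 1)
    have hc1 := hc (n + 1)
    have hc2 := hc (n + 1 + k)
    have e : (t ^ (n + k + 1))⁻¹ * (c (n + k + 1))⁻¹ =
        (c (n + 1) / c (n + 1 + k)) * (t ^ k)⁻¹ * ((t ^ (n + 1))⁻¹ * (c (n + 1))⁻¹) := by
      rw [show n + k + 1 = n + 1 + k by ring, pow_add t (n + 1) k]
      field_simp
    rw [e]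
    gcongr
  have hpos : 0 ≤ δ * (r ^ k)⁻¹ := by positivity
  have hc1 := hc (n + 1)
  calc ENNReal.ofReal (δ * (r ^ k)⁻¹ * Real.exp M) *
        (ENNReal.ofReal ((t ^ (n + 1))⁻¹ * (c (n + 1))⁻¹) * transferInd A φ ψ a (n + 1) o g)
      = ENNReal.ofReal (δ * (r ^ k)⁻¹ * ((t ^ (n + 1))⁻¹ * (c (n + 1))⁻¹)) *
        (ENNReal.ofReal (Real.exp M) * transferInd A φ ψ a (n + 1) o g) := by
        rw [ENNReal.ofReal_mul hpos, ENNReal.ofReal_mul hpos]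
        ring
    _ ≤ _ := by
        refine mul_le_mul' (ENNReal.ofReal_le_ofReal hcoef) (h1.trans (le_of_eq ?_))
        rw [show n + 1 + k = n + k + 1 by ring]

/-- The point obtained by prepending to `o` a loop with `ψ`-product `g` contributes a positive
term. -/
lemma zeta_pos (hT : TopTransitive (skewA A ψ)) {P : ℝ}
    (hP : ∀ (b : S) (h : G), gurevicSkew A ψ φ b h = (P : EReal))
    {c : ℕ → ℝ} (hc : ∀ n : ℕ, 0 < c n) {a : S} {o : Space A} (ho : o.1 0 = a)
    {t : ℝ} (ht : 0 < t) (g : G) : zeta A φ ψ a c t o g ≠ 0 := by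
  obtain ⟨k, x, hk, hx0, hxk, hγ⟩ := exists_loop hT hP a g
  obtain ⟨n, rfl⟩ : ∃ n, k = n + 1 := ⟨k - 1, by omega⟩
  unfold zeta
  intro h0
  have h1 := ENNReal.tsum_eq_zero.1 h0 n
  have hc1 := hc (n + 1)
  rcases mul_eq_zero.1 h1 with h2 | h2
  · rw [ENNReal.ofReal_eq_zero] at h2
    have : 0 < (t ^ (n + 1))⁻¹ * (c (n + 1))⁻¹ := by positivity
    linarith
  · have h3 := ENNReal.tsum_eq_zero.1 h2 ⟨prepend (n + 1) x o (hxk.trans ho.symm),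
      shift_prepend _, by rw [prepend_lt _ (by omega), hx0], by rw [psiN_prepend, hγ]⟩
    rw [ENNReal.ofReal_eq_zero] at h3
    exact absurd h3 (not_le.2 (Real.exp_pos _))

end Comparison

/-- uniform bounds on the ratios `ζ_{o,g}(t)/ζ_{o,e}(t)` for `ρ < t ≤ ρ'`. -/
theorem statement_5 {S G : Type*} [Countable S] [Group G] [Countable G]
    (A : S → S → Prop) (φ : Space A → ℝ) (ψ : S → G)
    (hT : TopTransitive (skewA A ψ))
    (hφ : LocHolder A φ)
    (P : ℝ) (hP : ∀ (b : S) (h : G), gurevicSkew A ψ φ b h = (P : EReal))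
    (c : ℕ → ℝ) (hc : ∀ n : ℕ, 0 < c n)
    (hcr : ∀ k : ℕ, 1 ≤ k → Tendsto (fun n : ℕ => c n / c (n + k)) atTop (nhds 1))
    (a : S)
    (hfin : ∀ o ∈ CylS A a, ∀ (g : G) (t : ℝ), Real.exp P < t →
      zeta A φ ψ a c t o g < ⊤) :
    ∀ ρ' : ℝ, Real.exp P < ρ' → ∀ g : G,
      0 < (⨅ o ∈ CylS A a, ⨅ t ∈ Set.Ioc (Real.exp P) ρ',
            zeta A φ ψ a c t o g / zeta A φ ψ a c t o 1) ∧
        (⨆ o ∈ CylS A a, ⨆ t ∈ Set.Ioc (Real.exp P) ρ',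
            zeta A φ ψ a c t o g / zeta A φ ψ a c t o 1) < ⊤ := by
  intro ρ' hρ g
  have hr : 0 < ρ' := (Real.exp_pos P).trans hρ
  constructor
  · obtain ⟨κ, hκ, h⟩ := zeta_le hT hφ hP hc hcr a hr 1 g
    refine lt_of_lt_of_le (ENNReal.ofReal_pos.2 hκ) ?_
    refine le_iInf₂ fun o ho => le_iInf₂ fun t ht => ?_
    have ht0 := (Real.exp_pos P).trans ht.1
    rw [ENNReal.le_div_iff_mul_le (Or.inl (zeta_pos hT hP hc ho ht0 1))
      (Or.inl (hfin o ho 1 t ht.1).ne)]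
    exact h o t ht0 ht.2
  · obtain ⟨κ, hκ, h⟩ := zeta_le hT hφ hP hc hcr a hr g 1
    refine lt_of_le_of_lt (b := (ENNReal.ofReal κ)⁻¹) ?_
      (ENNReal.inv_lt_top.2 (ENNReal.ofReal_pos.2 hκ))
    refine iSup₂_le fun o ho => iSup₂_le fun t ht => ?_
    refine ENNReal.div_le_of_le_mul ?_
    rw [← ENNReal.mul_le_iff_le_inv (ENNReal.ofReal_pos.2 hκ).ne' ENNReal.ofReal_ne_top]
    exact h o t ((Real.exp_pos P).trans ht.1) ht.2

end Gurevic
end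

section
/- Let σ : Σ → Σ be a one-sided countable state Markov shift, G a countable amenable group, ψ : Σ → G depending only on the first coordinate with T_ψ topologically transitive, φ : Σ → ℝ locally Hölder continuous, ρ = e^{P_G(φ,T_ψ)} < ∞. Fix a state a, o ∈ [a], Z = ∪_{n≥0} {z : σ^n z = o}. Suppose Φ : Z × G → (0,∞) satisfies (𝓛_φ^n Φ)(o,g) = ρ^n Φ(o,g) for all g ∈ G and n ≥ 1, and that for every (z,γ) ∈ Z × G and every state a': 0 < inf_{z' ∈ Z ∩ [a']} inf_{g ∈ G} Φ(z', gγ^{−1})/Φ(o,g) ≤ sup_{z' ∈ Z ∩ [a']} sup_{g ∈ G} Φ(z', gγ^{−1})/Φ(o,g) < ∞. Then there exists a function ϕ : Z × G → (0,∞) such that (i) (𝓛_φ^n ϕ)(o,g) ≤ ρ^n ϕ(o,g) for all g ∈ G and n ≥ 1; (ii) for every z ∈ Z the map γ ↦ ϕ(z,γ)/ϕ(z,e) is a group homomorphism from G to the multiplicative group (0,∞); and (iii) for every state a' and every γ ∈ G, inf_{z ∈ Z ∩ [a']} ϕ(z,γ) > 0. -/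
/-!
Write `M` for the right-invariant mean and average logarithms of the given eigenfunction `Φ`:

  `ϕ(z, γ) = exp M(g ↦ log Φ(z, gγ) - log Φ(o, g))`.

The two-sided bounds on `Φ(z, gγ⁻¹) / Φ(o, g)` make the averaged function bounded, and uniformly
bounded below over `z` in a fixed cylinder, which gives positivity of the infimum of `ϕ`.
Since `ϕ(z, γ) / ϕ(z, 1) = exp M(g ↦ log Φ(z, gγ) - log Φ(z, g))`, additivity and right invariance
of `M` turn the cocycle identity into multiplicativity in `γ`.
Subinvariance is Jensen's inequality `exp (M f) ≤ M (exp f)` (`RightInvariantMean.exp_le`):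
after division by `ϕ(o, γ)`, every finite part of the sum defining `𝓛ⁿϕ(o, γ)` is at most the mean
of the corresponding finite part of `g ↦ 𝓛ⁿΦ(o, gγ) / Φ(o, gγ)`, and the latter is at most `ρⁿ`.
An inequality and not an equality results because `M` is only finitely additive.
-/


open scoped ENNReal NNReal BigOperators
open Filter

namespace Gurevic

/-! ### Invariant means on bounded functions -/

section MeanLemmas

variable {G : Type*}

theorem IsBddFn.of_bounds {f : G → ℝ} (c d : ℝ) (h : ∀ g, c ≤ f g ∧ f g ≤ d) : IsBddFn f :=
  ⟨max |c| |d|, fun g => abs_le_max_abs_abs (h g).1 (h g).2⟩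

theorem IsBddFn.add {f₁ f₂ : G → ℝ} (h₁ : IsBddFn f₁) (h₂ : IsBddFn f₂) :
    IsBddFn (f₁ + f₂) := by
  obtain ⟨C, hC⟩ := h₁
  obtain ⟨D, hD⟩ := h₂
  exact ⟨C + D, fun g => (abs_add_le _ _).trans (add_le_add (hC g) (hD g))⟩

theorem IsBddFn.smul {f : G → ℝ} (h : IsBddFn f) (c : ℝ) : IsBddFn (c • f) := by
  obtain ⟨C, hC⟩ := h
  refine ⟨|c| * C, fun g => ?_⟩
  simp only [Pi.smul_apply, smul_eq_mul, abs_mul]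
  exact mul_le_mul_of_nonneg_left (hC g) (abs_nonneg c)

theorem IsBddFn.sub {f₁ f₂ : G → ℝ} (h₁ : IsBddFn f₁) (h₂ : IsBddFn f₂) :
    IsBddFn (f₁ - f₂) := by
  have h := h₁.add (h₂.smul (-1))
  rwa [neg_one_smul, ← sub_eq_add_neg] at h

theorem IsBddFn.const (c : ℝ) : IsBddFn (fun _ : G => c) := ⟨|c|, fun _ => le_rfl⟩

theorem IsBddFn.exp {f : G → ℝ} (h : IsBddFn f) : IsBddFn (fun g => Real.exp (f g)) := by
  obtain ⟨C, hC⟩ := h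
  refine IsBddFn.of_bounds 0 (Real.exp C) fun g => ⟨(Real.exp_pos _).le, ?_⟩
  exact Real.exp_le_exp.2 ((le_abs_self _).trans (hC g))

theorem IsBddFn.sum {ι : Type*} (s : Finset ι) {f : ι → G → ℝ} (h : ∀ i, IsBddFn (f i)) :
    IsBddFn (∑ i ∈ s, f i) := by
  classical
  induction s using Finset.induction_on with
  | empty => rw [Finset.sum_empty]; exact IsBddFn.const 0
  | insert i s hi ih => rw [Finset.sum_insert hi]; exact (h i).add ih

namespace RightInvariantMean

variable [Group G] (m : RightInvariantMean G)

theorem map_sub {f₁ f₂ : G → ℝ} (h₁ : IsBddFn f₁) (h₂ : IsBddFn f₂) :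
    m.M (f₁ - f₂) = m.M f₁ - m.M f₂ := by
  have h := m.map_add (f₁ - f₂) f₂ (h₁.sub h₂) h₂
  rw [sub_add_cancel] at h
  linarith

theorem map_const (c : ℝ) : m.M (fun _ => c) = c := by
  have h := m.map_smul c (fun _ => 1) (IsBddFn.const 1)
  rw [m.map_one, mul_one] at h
  rwa [show (c • fun _ => (1 : ℝ)) = fun _ : G => c from funext fun _ => mul_one c] at h

theorem mono {f₁ f₂ : G → ℝ} (h₁ : IsBddFn f₁) (h₂ : IsBddFn f₂) (h : ∀ g, f₁ g ≤ f₂ g) :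
    m.M f₁ ≤ m.M f₂ := by
  have := m.nonneg (f₂ - f₁) (h₂.sub h₁) fun g => sub_nonneg.2 (h g)
  rw [m.map_sub h₂ h₁] at this
  linarith

theorem map_sum {ι : Type*} (s : Finset ι) {f : ι → G → ℝ} (h : ∀ i, IsBddFn (f i)) :
    m.M (∑ i ∈ s, f i) = ∑ i ∈ s, m.M (f i) := by
  classical
  induction s using Finset.induction_on with
  | empty => rw [Finset.sum_empty, Finset.sum_empty]; exact m.map_const 0
  | insert i s hi ih =>
    rw [Finset.sum_insert hi, Finset.sum_insert hi, m.map_add _ _ (h i) (IsBddFn.sum s h), ih]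

/-- Jensen's inequality for an invariant mean and the exponential. -/
theorem exp_le {f : G → ℝ} (h : IsBddFn f) :
    Real.exp (m.M f) ≤ m.M (fun g => Real.exp (f g)) := by
  -- compare `exp ∘ f` with the tangent line of `exp` at the point `M f`
  have hc : IsBddFn (fun _ : G => 1 - m.M f) := IsBddFn.const _
  have hl := (h.add hc).smul (Real.exp (m.M f))
  have key := m.mono hl h.exp fun g => by
    have h1 := Real.add_one_le_exp (f g - m.M f)
    have h2 : Real.exp (f g) = Real.exp (m.M f) * Real.exp (f g - m.M f) := by
      rw [← Real.exp_add]; congr 1; ring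
    rw [h2]
    simp only [Pi.smul_apply, Pi.add_apply, smul_eq_mul]
    exact mul_le_mul_of_nonneg_left (by linarith) (Real.exp_pos _).le
  rw [m.map_smul _ _ (h.add hc), m.map_add _ _ h hc, m.map_const] at key
  linarith

end RightInvariantMean

end MeanLemmas

/-! ### Logarithmic averaging of the eigenfunction -/

/-- The function `g ↦ log Φ(z, gγ) - log Φ(o, g)` whose mean is `log ϕ(z, γ)`. -/
noncomputable def logRatio {S G : Type*} [Group G] {A : S → S → Prop} (o : Space A)
    (Φ : Space A → G → ℝ≥0∞) (z : Space A) (γ g : G) : ℝ :=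
  Real.log (Φ z (g * γ)).toReal - Real.log (Φ o g).toReal

/-- using amenability of `G`, `Φ` can be replaced by a function `ϕ`
which is subinvariant and a homomorphism in the second variable (after normalization). -/
theorem statement_9 {S G : Type*} [Countable S] [Group G] [Countable G]
    (hG : Amenable G)
    (A : S → S → Prop) (φ : Space A → ℝ) (ψ : S → G)
    (hT : TopTransitive (skewA A ψ))
    (hφ : LocHolder A φ)
    (P : ℝ) (hP : ∀ (b : S) (h : G), gurevicSkew A ψ φ b h = (P : EReal))
    (a : S) (o : Space A) (ho : o ∈ CylS A a)
    (Φ : Space A → G → ℝ≥0∞)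
    (hΦpos : ∀ z ∈ preOrbit A o, ∀ g : G, 0 < Φ z g ∧ Φ z g < ⊤)
    (hΦeig : ∀ (g : G) (n : ℕ), 1 ≤ n →
      transferOp A φ ψ n Φ o g = (ENNReal.ofReal (Real.exp P)) ^ n * Φ o g)
    (hΦbd : ∀ (γ : G) (a' : S),
      0 < (⨅ z ∈ preOrbit A o ∩ CylS A a', ⨅ g : G, Φ z (g * γ⁻¹) / Φ o g) ∧
        (⨆ z ∈ preOrbit A o ∩ CylS A a', ⨆ g : G, Φ z (g * γ⁻¹) / Φ o g) < ⊤) :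
    ∃ ϕ : Space A → G → ℝ≥0∞,
      (∀ z ∈ preOrbit A o, ∀ g : G, 0 < ϕ z g ∧ ϕ z g < ⊤) ∧
      (∀ (g : G) (n : ℕ), 1 ≤ n →
        transferOp A φ ψ n ϕ o g ≤ (ENNReal.ofReal (Real.exp P)) ^ n * ϕ o g) ∧
      (∀ z ∈ preOrbit A o, ∀ γ δ : G,
        ϕ z (γ * δ) / ϕ z 1 = (ϕ z γ / ϕ z 1) * (ϕ z δ / ϕ z 1)) ∧
      (∀ (a' : S) (γ : G), 0 < ⨅ z ∈ preOrbit A o ∩ CylS A a', ϕ z γ) := by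
  obtain ⟨m⟩ := hG
  have hoZ : o ∈ preOrbit A o := ⟨0, rfl⟩
  have hpos : ∀ z ∈ preOrbit A o, ∀ g : G, 0 < (Φ z g).toReal := fun z hz g =>
    ENNReal.toReal_pos (hΦpos z hz g).1.ne' (hΦpos z hz g).2.ne
  have hlog : ∀ z ∈ preOrbit A o, ∀ γ g : G,
      logRatio o Φ z γ g = Real.log (Φ z (g * γ) / Φ o g).toReal := fun z hz γ g => by
    rw [ENNReal.toReal_div, Real.log_div (hpos z hz _).ne' (hpos o hoZ _).ne', logRatio]
  -- the lower bound is uniform over a cylinder; the `min` with `1` covers the case of an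
  -- infimum over the empty set, which is `⊤`
  have hlow : ∀ (γ : G) (a' : S), ∃ c : ℝ, ∀ z ∈ preOrbit A o ∩ CylS A a', ∀ g : G,
      c ≤ logRatio o Φ z γ g := by
    intro γ a'
    have h := (hΦbd γ⁻¹ a').1
    set I := ⨅ z ∈ preOrbit A o ∩ CylS A a', ⨅ g : G, Φ z (g * γ⁻¹⁻¹) / Φ o g with hI
    refine ⟨Real.log (min I 1).toReal, fun z hz g => ?_⟩
    have hle : I ≤ Φ z (g * γ) / Φ o g := by
      refine (iInf₂_le z hz).trans ((iInf_le _ g).trans ?_)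
      rw [inv_inv]
    have hfin : Φ z (g * γ) / Φ o g ≠ ⊤ :=
      ENNReal.div_ne_top (hΦpos z hz.1 _).2.ne (hΦpos o hoZ g).1.ne'
    rw [hlog z hz.1]
    refine Real.log_le_log (ENNReal.toReal_pos (lt_min h one_pos).ne' ?_)
      (ENNReal.toReal_mono hfin ((min_le_left _ _).trans hle))
    exact ((min_le_right _ _).trans_lt ENNReal.one_lt_top).ne
  have hup : ∀ z ∈ preOrbit A o, ∀ γ : G, ∃ d : ℝ, ∀ g : G, logRatio o Φ z γ g ≤ d := by
    intro z hz γ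
    have h := (hΦbd γ⁻¹ (z.1 0)).2
    refine ⟨Real.log (⨆ z' ∈ preOrbit A o ∩ CylS A (z.1 0), ⨆ g : G,
      Φ z' (g * γ⁻¹⁻¹) / Φ o g).toReal, fun g => ?_⟩
    rw [hlog z hz]
    refine Real.log_le_log ?_ (ENNReal.toReal_mono h.ne ?_)
    · rw [ENNReal.toReal_div]
      exact div_pos (hpos z hz _) (hpos o hoZ _)
    · have h2 : Φ z (g * γ) / Φ o g ≤ ⨆ g : G, Φ z (g * γ⁻¹⁻¹) / Φ o g := by
        refine le_trans ?_ (le_iSup _ g)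
        rw [inv_inv]
      exact h2.trans (le_iSup₂ (f := fun z' (_ : z' ∈ preOrbit A o ∩ CylS A (z.1 0)) =>
        ⨆ g : G, Φ z' (g * γ⁻¹⁻¹) / Φ o g) z ⟨hz, rfl⟩)
  have hbdd : ∀ z ∈ preOrbit A o, ∀ γ : G, IsBddFn (logRatio o Φ z γ) := by
    intro z hz γ
    obtain ⟨c, hc⟩ := hlow γ (z.1 0)
    obtain ⟨d, hd⟩ := hup z hz γ
    exact IsBddFn.of_bounds c d fun g => ⟨hc z ⟨hz, rfl⟩ g, hd g⟩
  refine ⟨fun z γ => ENNReal.ofReal (Real.exp (m.M (logRatio o Φ z γ))), ?_, ?_, ?_, ?_⟩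
  · exact fun z hz g => ⟨ENNReal.ofReal_pos.2 (Real.exp_pos _), ENNReal.ofReal_lt_top⟩
  · intro γ n hn
    unfold transferOp
    rw [ENNReal.tsum_eq_iSup_sum]
    refine iSup_le fun s => ?_
    have hyZ : ∀ y : {y : Space A // (shift A)^[n] y = o}, y.1 ∈ preOrbit A o :=
      fun y => ⟨n, y.2⟩
    -- `K y g = log (Φ(y, gγψₙ(y)⁻¹) / Φ(o, gγ))`
    let K : {y : Space A // (shift A)^[n] y = o} → G → ℝ := fun y =>
      logRatio o Φ y.1 (γ * (psiN ψ n y.1)⁻¹) - logRatio o Φ o γ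
    have hK : ∀ y, IsBddFn (K y) := fun y => (hbdd _ (hyZ y) _).sub (hbdd o hoZ γ)
    have hKexp : ∀ y g, Real.exp (K y g) =
        (Φ y.1 (g * γ * (psiN ψ n y.1)⁻¹)).toReal / (Φ o (g * γ)).toReal := by
      intro y g
      simp only [K, Pi.sub_apply, logRatio]
      rw [sub_sub_sub_cancel_right, Real.exp_sub, Real.exp_log (hpos _ (hyZ y) _),
        Real.exp_log (hpos o hoZ _), mul_assoc]
    have hpt : ∀ g : G, (∑ y ∈ s, Real.exp (birk A φ n y.1) • fun g => Real.exp (K y g)) g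
        ≤ Real.exp P ^ n := by
      intro g
      simp only [Finset.sum_apply, Pi.smul_apply, smul_eq_mul, hKexp, ← mul_div_assoc]
      rw [← Finset.sum_div, div_le_iff₀ (hpos o hoZ _)]
      have h1 : (∑ y ∈ s, ENNReal.ofReal (Real.exp (birk A φ n y.1)) *
          Φ y.1 (g * γ * (psiN ψ n y.1)⁻¹)) ≤
          ENNReal.ofReal (Real.exp P) ^ n * Φ o (g * γ) := by
        rw [← hΦeig (g * γ) n hn]
        exact ENNReal.sum_le_tsum s
      have h2 := ENNReal.toReal_mono (ENNReal.mul_ne_top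
        (ENNReal.pow_ne_top ENNReal.ofReal_ne_top) (hΦpos o hoZ _).2.ne) h1
      rw [ENNReal.toReal_sum fun y _ => ENNReal.mul_ne_top ENNReal.ofReal_ne_top
        (hΦpos _ (hyZ y) _).2.ne] at h2
      simpa [ENNReal.toReal_mul, ENNReal.toReal_ofReal, Real.exp_nonneg] using h2
    have hmean : ∑ y ∈ s, Real.exp (birk A φ n y.1) * Real.exp (m.M (K y)) ≤
        Real.exp P ^ n := by
      have hterm := fun y => (hK y).exp.smul (Real.exp (birk A φ n y.1))
      have h := m.mono (IsBddFn.sum s hterm) (IsBddFn.const _) hpt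
      rw [m.map_const, m.map_sum s hterm] at h
      refine le_trans (Finset.sum_le_sum fun y _ => ?_) h
      rw [m.map_smul _ _ (hK y).exp]
      exact mul_le_mul_of_nonneg_left (m.exp_le (hK y)) (Real.exp_pos _).le
    have hreal : ∑ y ∈ s, Real.exp (birk A φ n y.1) *
        Real.exp (m.M (logRatio o Φ y.1 (γ * (psiN ψ n y.1)⁻¹))) ≤
        Real.exp P ^ n * Real.exp (m.M (logRatio o Φ o γ)) := by
      refine le_trans (le_of_eq ?_) (mul_le_mul_of_nonneg_right hmean (Real.exp_pos _).le)
      rw [Finset.sum_mul]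
      refine Finset.sum_congr rfl fun y _ => ?_
      rw [mul_assoc (Real.exp _) (Real.exp (m.M (K y))), ← Real.exp_add (m.M (K y)),
        m.map_sub (hbdd _ (hyZ y) _) (hbdd o hoZ γ),
        sub_add_cancel]
    rw [← ENNReal.ofReal_pow (Real.exp_pos _).le,
      ← ENNReal.ofReal_mul (pow_nonneg (Real.exp_pos _).le n)]
    simp only [← ENNReal.ofReal_mul (Real.exp_pos _).le]
    rw [← ENNReal.ofReal_sum_of_nonneg fun y _ => by positivity]
    exact ENNReal.ofReal_le_ofReal hreal
  · intro z hz γ δ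
    have hadd : m.M (logRatio o Φ z (γ * δ)) - m.M (logRatio o Φ z γ) =
        m.M (logRatio o Φ z δ) - m.M (logRatio o Φ z 1) := by
      rw [← m.map_sub (hbdd z hz _) (hbdd z hz _), ← m.map_sub (hbdd z hz _) (hbdd z hz _),
        ← m.right_invariant _ ((hbdd z hz δ).sub (hbdd z hz 1)) γ]
      congr 1
      funext g
      simp only [Pi.sub_apply, logRatio, mul_one, mul_assoc]
      ring
    simp only [← ENNReal.ofReal_div_of_pos (Real.exp_pos _), ← Real.exp_sub]
    rw [← ENNReal.ofReal_mul (Real.exp_pos _).le, ← Real.exp_add]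
    congr 2
    linarith
  · intro a' γ
    obtain ⟨c, hc⟩ := hlow γ a'
    refine lt_of_lt_of_le (ENNReal.ofReal_pos.2 (Real.exp_pos c))
      (le_iInf₂ fun z hz => ENNReal.ofReal_le_ofReal (Real.exp_le_exp.2 ?_))
    have h := m.mono (IsBddFn.const c) (hbdd z hz.1 γ) (hc z hz)
    rwa [m.map_const] at h

end Gurevic
end

section
/- Let σ : Σ → Σ be a one-sided countable state Markov shift, G a countable group, ψ : Σ → G depending only on the first coordinate with T_ψ topologically transitive, φ : Σ → ℝ locally Hölder continuous, ρ = e^{P_G(φ,T_ψ)} < ∞. Fix a state a, o ∈ [a], Z = ∪_{n≥0} {z : σ^n z = o}. Suppose ϕ : Z × G → (0,∞) satisfies (i) (𝓛_φ^n ϕ)(o,g) ≤ ρ^n ϕ(o,g) for all g ∈ G and n ≥ 1, (ii) for every z ∈ Z the map γ ↦ ϕ(z,γ)/ϕ(z,e) is a group homomorphism from G to the multiplicative group (0,∞), and (iii) for every state a' and γ ∈ G, inf_{z ∈ Z ∩ [a']} ϕ(z,γ) > 0. Then there exists ϕ̄ : Z × Ḡ → (0,∞) such that (𝔏_φ^n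 ϕ̄)(o,m) ≤ ρ^n ϕ̄(o,m) for all m ∈ Ḡ and n ≥ 1, and for every state a' and every m ∈ Ḡ, inf_{z ∈ Z ∩ [a']} ϕ̄(z,m) > 0. -/
/-!
For `z ∈ Z` the normalised function `γ ↦ ϕ(z,γ)/ϕ(z,e)` is a homomorphism into a commutative
group without torsion, namely the positive reals, so it is trivial on every element having a positive power
in the commutator subgroup, i.e. on `ker π`. Hence `ϕ(z,·)` is constant on the fibres of `π`
(`eq_of_map_eq`) and descends to `ϕ̄(z,m) = ϕ(z,γ)` for any `γ` with `π γ = m`. Since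
`π ∘ ψ_n` is the cocycle of `π ∘ ψ`, the two transfer operators at `o` agree term by term, and the
bounds on `ϕ` are those on `ϕ̄`.
-/

open scoped ENNReal NNReal BigOperators
open Filter

namespace Gurevic

/-- A multiplicative character with values in `ℝ≥0∞` is trivial on the kernel of the
projection to the torsion-free part of the abelianization. -/
lemma char_eq_one {G : Type*} [Group G] {d : ℕ} {π : G →* Multiplicative (Fin d → ℤ)}
    (hπ : IsTorsionFreeAbelianization d π) (χ : G →* ℝ≥0∞) {g : G} (hg : π g = 1) :
    χ g = 1 := by
  obtain ⟨n, hn, hgn⟩ := (hπ.2 g).1 hg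
  -- passing to units makes the target a commutative group
  have h1 : χ.toHomUnits (g ^ n) = 1 :=
    Abelianization.commutator_subset_ker χ.toHomUnits hgn
  have h2 : χ g ^ n = 1 := by
    rw [← map_pow, ← MonoidHom.coe_toHomUnits, h1, Units.val_one]
  refine (ENNReal.toReal_eq_one_iff _).1
    ((pow_eq_one_iff_of_nonneg ENNReal.toReal_nonneg hn.ne').1 ?_)
  rw [← ENNReal.toReal_pow, h2, ENNReal.toReal_one]

lemma eq_of_map_eq {G : Type*} [Group G] {d : ℕ} {π : G →* Multiplicative (Fin d → ℤ)}
    (hπ : IsTorsionFreeAbelianization d π) (f : G → ℝ≥0∞)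
    (hpos : 0 < f 1 ∧ f 1 < ⊤)
    (hhom : ∀ γ δ : G, f (γ * δ) / f 1 = (f γ / f 1) * (f δ / f 1))
    {g h : G} (hgh : π g = π h) : f g = f h := by
  let χ : G →* ℝ≥0∞ :=
    { toFun := fun γ => f γ / f 1
      map_one' := ENNReal.div_self hpos.1.ne' hpos.2.ne
      map_mul' := hhom }
  have hk : χ (h⁻¹ * g) = 1 := char_eq_one hπ χ (by rw [map_mul, map_inv, hgh, inv_mul_cancel])
  have hχ : χ g = χ h := by
    rw [← mul_inv_cancel_left h g, map_mul, hk, mul_one]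
  have h2 := congrArg (· * f 1) hχ
  simpa [χ, ENNReal.div_mul_cancel hpos.1.ne' hpos.2.ne] using h2

lemma psiN_comp {S G H : Type*} [Monoid G] [Monoid H] {A : S → S → Prop} (π : G →* H)
    (ψ : S → G) (n : ℕ) (x : Space A) :
    psiN (fun s => π (ψ s)) n x = π (psiN ψ n x) := by
  simp [psiN, map_list_prod, Function.comp_def]

/-- descending from `G` to `Ḡ ≅ ℤ^d`: there is a function `ϕ̄` on
`Z × Ḡ` subinvariant for the abelianized transfer operator `𝔏_φ`. -/
theorem statement_10 {S G : Type*} [Countable S] [Group G] [Countable G]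
    (A : S → S → Prop) (φ : Space A → ℝ) (ψ : S → G)
    (d : ℕ) (π : G →* Multiplicative (Fin d → ℤ))
    (hπ : IsTorsionFreeAbelianization d π)
    (hT : TopTransitive (skewA A ψ))
    (hφ : LocHolder A φ)
    (P : ℝ) (hP : ∀ (b : S) (h : G), gurevicSkew A ψ φ b h = (P : EReal))
    (a : S) (o : Space A) (ho : o ∈ CylS A a)
    (ϕ : Space A → G → ℝ≥0∞)
    (hpos : ∀ z ∈ preOrbit A o, ∀ g : G, 0 < ϕ z g ∧ ϕ z g < ⊤)
    (hsub : ∀ (g : G) (n : ℕ), 1 ≤ n →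
      transferOp A φ ψ n ϕ o g ≤ (ENNReal.ofReal (Real.exp P)) ^ n * ϕ o g)
    (hhom : ∀ z ∈ preOrbit A o, ∀ γ δ : G,
      ϕ z (γ * δ) / ϕ z 1 = (ϕ z γ / ϕ z 1) * (ϕ z δ / ϕ z 1))
    (hinf : ∀ (a' : S) (γ : G), 0 < ⨅ z ∈ preOrbit A o ∩ CylS A a', ϕ z γ) :
    ∃ ϕb : Space A → Multiplicative (Fin d → ℤ) → ℝ≥0∞,
      (∀ z ∈ preOrbit A o, ∀ m : Multiplicative (Fin d → ℤ), 0 < ϕb z m ∧ ϕb z m < ⊤) ∧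
      (∀ (m : Multiplicative (Fin d → ℤ)) (n : ℕ), 1 ≤ n →
        transferOp A φ (fun s => π (ψ s)) n ϕb o m ≤
          (ENNReal.ofReal (Real.exp P)) ^ n * ϕb o m) ∧
      (∀ (a' : S) (m : Multiplicative (Fin d → ℤ)),
        0 < ⨅ z ∈ preOrbit A o ∩ CylS A a', ϕb z m) := by
  choose sec hsec using hπ.1
  have key : ∀ z ∈ preOrbit A o, ∀ g h : G, π g = π h → ϕ z g = ϕ z h := fun z hz g h hgh =>
    eq_of_map_eq hπ (ϕ z) (hpos z hz 1) (hhom z hz) hgh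
  refine ⟨fun z m => ϕ z (sec m), fun z hz m => hpos z hz _, fun m n hn => ?_,
    fun a' m => hinf a' _⟩
  refine le_trans (le_of_eq ?_) (hsub (sec m) n hn)
  unfold transferOp
  refine tsum_congr fun y => ?_
  congr 1
  refine key _ ⟨n, y.2⟩ _ _ ?_
  rw [hsec, map_mul, map_inv, hsec, psiN_comp]


end Gurevic
end
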